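/- ∑_{n=1}^∞ C(2n,n) / (4ⁿ · n⁶) = (79/15120)·π⁶ - 12·ζ(5)·log 2 + (1/20)·π⁴·log²2 - 2·ζ(3)² + (2/3)·ζ(3)·π²·log 2 - (8/3)·ζ(3)·log³2 + (1/9)·π²·log⁴2 - (4/45)·log⁶2. -/

import Mathlib

open Filter Topology

lemma ps_aux (g : ℕ → ℝ) (hg : Summable fun k => |g k| * (1/4 : ℝ) ^ k) :
    HasFPowerSeriesOnBall (FormalMultilinearSeries.ofScalarsSum (E := ℝ) g)
      (FormalMultilinearSeries.ofScalars ℝ g) 0 (FormalMultilinearSeries.ofScalars ℝ g).radius := by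
  apply FormalMultilinearSeries.hasFPowerSeriesOnBall
  have h : ((1/4 : NNReal) : ENNReal) ≤ (FormalMultilinearSeries.ofScalars ℝ g).radius := by
    apply FormalMultilinearSeries.le_radius_of_summable
    simpa [FormalMultilinearSeries.ofScalars_norm] using hg
  refine lt_of_lt_of_le ?_ h
  simp

lemma ps_deriv (g : ℕ → ℝ) (hg : Summable fun k => |g k| * (1/4 : ℝ) ^ k) (n : ℕ) :
    iteratedDeriv n (FormalMultilinearSeries.ofScalarsSum (E := ℝ) g) 0 = n.factorial * g n := by
  have := (ps_aux g hg).factorial_smul 1 n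
  rw [iteratedDeriv_eq_iteratedFDeriv, ← this]
  simp

lemma key (g c : ℕ → ℝ) (hg : Summable fun k => |g k| * (1/4 : ℝ) ^ k)
    (hc : Summable fun k => |c k| * (1/4 : ℝ) ^ k)
    (h : ∀ s : ℝ, 0 < s → s < 1/4 → ∑' k, g k * s ^ k = Real.exp (∑' k, c k * s ^ k)) (n : ℕ) :
    (n + 1) * g (n + 1) = ∑ i ∈ Finset.range (n + 1), (i + 1) * c (i + 1) * g (n - i) := by
  set G := FormalMultilinearSeries.ofScalarsSum (E := ℝ) g with hG
  set C := FormalMultilinearSeries.ofScalarsSum (E := ℝ) c with hC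
  have aG : AnalyticAt ℝ G 0 := (ps_aux g hg).analyticAt
  have aC : AnalyticAt ℝ C 0 := (ps_aux c hc).analyticAt
  have hev : ∀ᶠ z in 𝓝 0, G z = Real.exp (C z) := by
    have aE : AnalyticAt ℝ (fun z => Real.exp (C z)) 0 := aC.rexp
    rw [← aG.frequently_eq_iff_eventually_eq aE]
    have h1 : ∀ᶠ z in 𝓝[>] (0:ℝ), G z = Real.exp (C z) := by
      filter_upwards [Ioo_mem_nhdsGT (show (0:ℝ) < 1/4 by norm_num)] with s hs
      have := h s hs.1 hs.2
      simpa [hG, hC, FormalMultilinearSeries.ofScalarsSum_eq_tsum] using this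
    exact h1.frequently.filter_mono (nhdsWithin_mono _ (fun x hx => ne_of_gt hx))
  have hd : deriv G =ᶠ[𝓝 0] (fun z => deriv C z * G z) := by
    filter_upwards [hev.eventually_nhds, aC.eventually_analyticAt] with z hz hz2
    rw [Filter.EventuallyEq.deriv_eq hz, hz.self_of_nhds,
      deriv_exp hz2.differentiableAt, mul_comm]
  have h1 : iteratedDeriv (n+1) G 0 = iteratedDeriv n (fun z => deriv C z * G z) 0 := by
    rw [iteratedDeriv_succ']
    exact Filter.EventuallyEq.iteratedDeriv_eq n hd
  rw [iteratedDeriv_fun_mul aC.deriv.contDiffAt aG.contDiffAt, ps_deriv g hg] at h1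
  simp_rw [← iteratedDeriv_succ', hC, hG, ps_deriv g hg, ps_deriv c hc] at h1
  have hn : (n.factorial : ℝ) ≠ 0 := by positivity
  apply mul_left_cancel₀ hn
  rw [Finset.mul_sum]
  have h2 : (n.factorial : ℝ) * ((n+1) * g (n+1)) = (n+1).factorial * g (n+1) := by
    rw [Nat.factorial_succ]; push_cast; ring
  rw [h2, h1]
  apply Finset.sum_congr rfl
  intro i hi
  have hi' : i ≤ n := by simpa [Nat.lt_succ_iff] using hi
  rw [← Nat.choose_mul_factorial_mul_factorial hi', Nat.factorial_succ]
  push_cast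
  ring

noncomputable def cbA (n : ℕ) : ℝ := (Nat.centralBinom n : ℝ) / 4 ^ n

lemma cbA_zero : cbA 0 = 1 := by simp [cbA]
lemma cbA_pos (n : ℕ) : 0 < cbA n := by
  unfold cbA; have := Nat.centralBinom_pos n; positivity
lemma cbA_succ (n : ℕ) : cbA (n+1) * (n + 1) = cbA n * (n + 1/2) := by
  have := Nat.succ_mul_centralBinom_succ n
  have h : ((n:ℝ)+1) * (Nat.centralBinom (n+1)) = 2 * (2 * n + 1) * Nat.centralBinom n := by
    exact_mod_cast this
  unfold cbA
  rw [pow_succ]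
  field_simp
  linear_combination 2 * h
lemma cbA_sq (n : ℕ) : (2 * n + 1) * cbA n ^ 2 ≤ 1 := by
  induction n with
  | zero => simp [cbA_zero]
  | succ n ih =>
    have h : cbA (n+1) = cbA n * (n + 1/2) / (n+1) := by
      rw [← cbA_succ]; field_simp
    rw [h]
    refine le_trans ?_ ih
    push_cast
    have : (2 * ((n:ℝ)+1) + 1) * (cbA n * (n+1/2) / (n+1))^2
      = ((2 * n + 1) * cbA n ^ 2) * ((2 * n + 3) * (n + 1/2) / (2 * (n+1)^2)) := by
      field_simp; ring
    rw [this]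
    apply mul_le_of_le_one_right
    · positivity
    · rw [div_le_one (by positivity)]; nlinarith
lemma cbA_tendsto : Tendsto cbA atTop (𝓝 0) := by
  have h : Tendsto (fun n => cbA n ^ 2) atTop (𝓝 0) := by
    refine squeeze_zero (fun n => by positivity) (g := fun n : ℕ => 1 / ((n:ℝ) + 1)) ?_
      tendsto_one_div_add_atTop_nhds_zero_nat
    intro n
    rw [le_div_iff₀ (by positivity)]
    have := cbA_sq n
    nlinarith [sq_nonneg (cbA n), mul_nonneg (Nat.cast_nonneg n : (0:ℝ) ≤ n) (sq_nonneg (cbA n))]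
  have := h.sqrt
  simpa [Real.sqrt_sq (cbA_pos _).le] using this

lemma cbA_telescope : HasSum (fun n => cbA n - cbA (n+1)) 1 := by
  rw [hasSum_iff_tendsto_nat_of_nonneg]
  · simp_rw [Finset.sum_range_sub', cbA_zero]
    simpa using cbA_tendsto.const_sub 1
  · intro n
    have := cbA_succ n
    have h2 := cbA_pos n
    rw [sub_nonneg]
    by_contra hh
    push Not at hh
    nlinarith

lemma cbA_summable : Summable (fun n : ℕ => cbA (n+1) / (n + 1)) := by
  refine Summable.of_nonneg_of_le (fun n => ?_) (fun n => ?_) (cbA_telescope.summable.mul_left 2)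
  · have := cbA_pos (n+1); positivity
  · have := cbA_succ n
    have h2 := cbA_pos n
    have h3 := cbA_pos (n+1)
    rw [div_le_iff₀ (by positivity)]
    nlinarith

noncomputable def cbG (s : ℝ) : ℝ := 1 + ∑' n : ℕ, cbA (n+1) * s / (n + 1 + s)

lemma cbG_summable {s : ℝ} (hs : 0 ≤ s) : Summable fun n : ℕ => cbA (n+1) * s / (n + 1 + s) := by
  refine Summable.of_nonneg_of_le (fun n => ?_) (fun n => ?_) (cbA_summable.mul_left s)
  · have := cbA_pos (n+1); positivity
  · have h3 := cbA_pos (n+1)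
    rw [mul_comm (cbA _), mul_div_assoc]
    exact mul_le_mul_of_nonneg_left
      (div_le_div_of_nonneg_left h3.le (by positivity) (by linarith)) hs

lemma cbG_zero : cbG 0 = 1 := by simp [cbG]

lemma cbG_mono {s t : ℝ} (hs : 0 ≤ s) (hst : s ≤ t) : cbG s ≤ cbG t := by
  unfold cbG
  gcongr 1 + ?_
  refine (cbG_summable hs).tsum_le_tsum (fun n => ?_) (cbG_summable (hs.trans hst))
  have h3 := cbA_pos (n+1)
  have ht := hs.trans hst
  rw [div_le_div_iff₀ (by positivity) (by positivity)]
  have : 0 ≤ cbA (n+1) * (n+1) * (t - s) := by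
    have := sub_nonneg.2 hst
    positivity
  nlinarith

lemma cbG_one_le {s : ℝ} (hs : 0 ≤ s) : 1 ≤ cbG s := by
  rw [← cbG_zero]; exact cbG_mono le_rfl hs

lemma cbG_fe {s : ℝ} (hs : 0 ≤ s) : cbG s * (s + 1) = cbG (s + 1) * (s + 1/2) := by
  have h1 : HasSum (fun n : ℕ => cbA n * (s + 1) / (n + 1 + s)) (cbG (s+1)) := by
    rw [← hasSum_nat_add_iff' 1]
    have := (cbG_summable (show 0 ≤ s + 1 by linarith)).hasSum
    have e : cbG (s+1) - ∑ i ∈ Finset.range 1, cbA i * (s + 1) / (i + 1 + s) =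
        ∑' n : ℕ, cbA (n+1) * (s+1) / (n + 1 + (s+1)) := by
      have : (1 + s) ≠ 0 := by positivity
      simp only [Finset.sum_range_one, cbA_zero, cbG]
      have e2 : 1 * (s+1) / (((0:ℕ):ℝ) + 1 + s) = 1 := by
        rw [div_eq_one_iff_eq]
        · simp [add_comm]
        · simpa using this
      rw [e2]; ring
    rw [e]
    refine this.congr_fun ?_
    intro n
    push_cast; congr 1; ring
  have h2 := (h1.mul_right (s + 1/2)).sub ((cbG_summable hs).hasSum.mul_right (s+1))
  have h3 := cbA_telescope.mul_right (s + 1)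
  have h6 : (fun n : ℕ => cbA n * (s + 1) / (n + 1 + s) * (s + 1/2)
      - cbA (n+1) * s / (n + 1 + s) * (s + 1)) = fun n => (cbA n - cbA (n+1)) * (s + 1) := by
    funext n
    have : (n:ℝ) + 1 + s ≠ 0 := by positivity
    have h5 := cbA_succ n
    field_simp
    linear_combination (2) * h5
  rw [← h6] at h3
  have h4 := h2.unique h3
  unfold cbG at h4 ⊢
  linarith

lemma cbG_prod {s : ℝ} (hs : 0 ≤ s) (N : ℕ) : Real.log (cbG s) = Real.log (cbG (s + N)) +
    ∑ m ∈ Finset.range N, (Real.log (s + m + 1/2) - Real.log (s + m + 1)) := by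
  induction N with
  | zero => simp
  | succ N ih =>
    rw [ih, Finset.sum_range_succ]
    have h := cbG_fe (show 0 ≤ s + N by positivity)
    have h1 := cbG_one_le (show 0 ≤ s + N by positivity)
    have h2 := cbG_one_le (show 0 ≤ s + N + 1 by positivity)
    have h3 := congrArg Real.log h
    rw [Real.log_mul (by positivity) (by positivity), Real.log_mul (by positivity) (by positivity)] at h3
    push_cast
    rw [← add_assoc s]
    linarith

noncomputable def cbT (s : ℝ) (m : ℕ) : ℝ :=
  Real.log (1 + s * (1 / (m + 1/2))) - Real.log (1 + s * (1/(m + 1)))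

lemma cbG_tendsto {s : ℝ} (hs : 0 ≤ s) (hs1 : s ≤ 1) :
    Tendsto (fun N => ∑ m ∈ Finset.range N, cbT s m) atTop (𝓝 (Real.log (cbG s))) := by
  have h0 : ∀ N : ℕ, ∑ m ∈ Finset.range N, cbT s m =
      Real.log (cbG s) - (Real.log (cbG (s + N)) - Real.log (cbG N)) := by
    intro N
    have h1 := cbG_prod hs N
    have h2 := cbG_prod le_rfl N
    have : ∑ m ∈ Finset.range N, cbT s m =
      ∑ m ∈ Finset.range N, (Real.log (s + m + 1/2) - Real.log (s + m + 1)) -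
      ∑ m ∈ Finset.range N, (Real.log (0 + m + 1/2) - Real.log (0 + m + 1)) := by
      rw [← Finset.sum_sub_distrib]
      apply Finset.sum_congr rfl
      intro m _
      unfold cbT
      have e1 : 1 + s * (1 / ((m:ℝ) + 1/2)) = (s + m + 1/2) / (0 + m + 1/2) := by field_simp; ring
      have e2 : 1 + s * (1 / ((m:ℝ) + 1)) = (s + m + 1) / (0 + m + 1) := by field_simp; ring
      rw [e1, e2, Real.log_div (by positivity) (by positivity), Real.log_div (by positivity) (by positivity)]
      ring
    rw [cbG_zero, Real.log_one, zero_add] at h2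
    rw [this]
    linarith
  simp_rw [h0]
  suffices h : Tendsto (fun N : ℕ => Real.log (cbG (s + N)) - Real.log (cbG N)) atTop (𝓝 0) by
    simpa using h.const_sub (Real.log (cbG s))
  refine squeeze_zero (g := fun N : ℕ => 1 / ((N:ℝ) + 1)) ?_ ?_ tendsto_one_div_add_atTop_nhds_zero_nat
  · intro N
    have h1 := cbG_one_le (show (0:ℝ) ≤ N by positivity)
    have := Real.log_le_log (by linarith) (cbG_mono (show (0:ℝ) ≤ N by positivity) (show (N:ℝ) ≤ s + N by linarith))
    linarith
  · intro N
    have h1 := cbG_one_le (show (0:ℝ) ≤ N by positivity)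
    have h2 := cbG_one_le (show (0:ℝ) ≤ s + N by positivity)
    have h3 := cbG_one_le (show (0:ℝ) ≤ N + 1 by positivity)
    have h4 := Real.log_le_log (by linarith) (cbG_mono (show (0:ℝ) ≤ s + N by positivity) (show s + N ≤ (N:ℝ)+1 by linarith))
    have h := cbG_fe (show (0:ℝ) ≤ N by positivity)
    have h5 : cbG (N+1) = cbG N * ((N+1)/(N+1/2)) := by
      field_simp; linarith
    rw [h5, Real.log_mul (by positivity) (by positivity)] at h4
    have h6 := Real.log_le_sub_one_of_pos (show (0:ℝ) < ((N:ℝ)+1)/(N+1/2) by positivity)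
    have h7 : ((N:ℝ)+1)/(N+1/2) - 1 ≤ 1 / ((N:ℝ)+1) := by
      have : ((N:ℝ)+1)/(N+1/2) - 1 = (1/2) / (N + 1/2) := by field_simp; ring
      rw [this, div_le_div_iff₀ (by positivity) (by positivity)]
      have : (0:ℝ) ≤ N := by positivity
      nlinarith
    linarith

lemma dbl_bound (f : ℕ → ℕ → ℝ) (u : ℕ → ℝ) (hu : Summable u)
    (hf : ∀ m k, |f m k| ≤ u m * 2 ^ k) (k : ℕ) : |∑' m, f m k| ≤ (∑' m, u m) * 2 ^ k := by
  have := tsum_of_norm_bounded (f := fun m => f m k) (hu.hasSum.mul_right (2 ^ k)) (fun m => hf m k)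
  simpa using this

lemma dbl_bound' (h : ℕ → ℝ) (C : ℝ) (hh : ∀ k, |h (k+1)| ≤ C * 2 ^ k) :
    Summable fun k => |h k| * (1/4 : ℝ) ^ k := by
  rw [← summable_nat_add_iff 1]
  have hs : Summable (fun k : ℕ => (C / 4) * (1/2 : ℝ) ^ k) :=
    (summable_geometric_of_lt_one (by norm_num) (by norm_num)).mul_left _
  refine Summable.of_nonneg_of_le (fun k => by positivity) (fun k => ?_) hs
  have e : (C / 4) * (1/2 : ℝ) ^ k = (C * 2 ^ k) * (1/4) ^ (k+1) := by
    rw [pow_succ, show (1/4 : ℝ) = 1/2 * (1/2) by norm_num, mul_pow]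
    have : (2:ℝ)^k * (1/2)^k = 1 := by rw [← mul_pow]; norm_num
    linear_combination (-C/4 * (1/2)^k) * this
  rw [e]
  exact mul_le_mul_of_nonneg_right (hh k) (by positivity)

lemma dbl (f : ℕ → ℕ → ℝ) (u : ℕ → ℝ) (hu : Summable u) (hu0 : ∀ m, 0 ≤ u m)
    (hf : ∀ m k, |f m k| ≤ u m * 2 ^ k) {s : ℝ} (hs : 0 < s) (hs1 : s < 1/4) (t : ℕ → ℝ)
    (ht : ∀ m, HasSum (fun k => f m k * s ^ (k+1)) (t m)) :
    Summable t ∧ HasSum (fun k => (∑' m, f m k) * s ^ (k+1)) (∑' m, t m) := by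
  have hv : Summable (fun k : ℕ => s * (2 * s) ^ k) :=
    (summable_geometric_of_lt_one (by positivity) (by linarith)).mul_left _
  have hF : Summable (fun p : ℕ × ℕ => f p.1 p.2 * s ^ (p.2+1)) := by
    refine Summable.of_norm_bounded (hu.mul_of_nonneg hv hu0 (fun k => by positivity)) ?_
    rintro ⟨m, k⟩
    simp only [Real.norm_eq_abs, abs_mul, abs_of_pos (pow_pos hs _)]
    calc |f m k| * s ^ (k+1) ≤ (u m * 2 ^ k) * s ^ (k+1) :=
          mul_le_mul_of_nonneg_right (hf m k) (by positivity)
      _ = u m * (s * (2 * s) ^ k) := by rw [mul_pow]; ring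
  have h1 := hF.hasSum.prod_fiberwise ht
  refine ⟨h1.summable, ?_⟩
  rw [h1.tsum_eq]
  have hF2 : HasSum (fun p : ℕ × ℕ => f p.2 p.1 * s ^ (p.1+1))
      (∑' p : ℕ × ℕ, f p.1 p.2 * s ^ (p.2+1)) :=
    (Equiv.prodComm ℕ ℕ).hasSum_iff.2 hF.hasSum
  refine hF2.prod_fiberwise (fun k => ?_)
  have : Summable (fun m => f m k) :=
    Summable.of_norm_bounded (hu.mul_right (2 ^ k)) (fun m => hf m k)
  exact this.hasSum.mul_right _

noncomputable def fG (m k : ℕ) : ℝ := (-1) ^ k * (cbA (m+1) / ((m:ℝ) + 1) ^ (k+1))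
noncomputable def fD (m k : ℕ) : ℝ :=
  (-1) ^ k / (k + 1) * ((1 / ((m:ℝ) + 1/2)) ^ (k+1) - (1 / ((m:ℝ) + 1)) ^ (k+1))

lemma fG_bound (m k : ℕ) : |fG m k| ≤ cbA (m+1) / (m+1) * 2 ^ k := by
  have h := cbA_pos (m+1)
  unfold fG
  rw [abs_mul, abs_pow, abs_neg, abs_one, one_pow, one_mul, abs_of_pos (by positivity)]
  have h1 : (1:ℝ) ≤ 2 ^ k := one_le_pow₀ (by norm_num)
  calc cbA (m+1) / ((m:ℝ) + 1) ^ (k+1) ≤ cbA (m+1) / ((m:ℝ) + 1) := by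
        apply div_le_div_of_nonneg_left h.le (by positivity)
        exact le_self_pow₀ (by linarith [(Nat.cast_nonneg m : (0:ℝ) ≤ m)]) (by simp)
    _ ≤ _ := le_mul_of_one_le_right (by positivity) h1

lemma fG_row {s : ℝ} (hs : 0 < s) (hs1 : s < 1/4) (m : ℕ) :
    HasSum (fun k => fG m k * s ^ (k+1)) (cbA (m+1) * s / (m + 1 + s)) := by
  have hm : (0:ℝ) ≤ m := Nat.cast_nonneg m
  have h1 : |(-(s / (m+1)))| < 1 := by
    rw [abs_neg, abs_of_pos (by positivity), div_lt_one (by positivity)]; linarith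
  have := (hasSum_geometric_of_abs_lt_one h1).mul_left (cbA (m+1) * s / (m+1))
  have e : cbA (m+1) * s / (m + 1 + s) = cbA (m+1) * s / (m+1) * (1 - (-(s / (m+1))))⁻¹ := by
    have : 1 - (-(s / ((m:ℝ)+1))) = (m + 1 + s) / (m+1) := by field_simp; ring
    rw [this]; field_simp
  rw [e]
  refine this.congr_fun (fun k => ?_)
  unfold fG
  rw [neg_pow (s / _), div_pow]
  field_simp
  ring

lemma pow_sub_le (x y : ℝ) (hy : 0 ≤ y) (hxy : y ≤ x) (k : ℕ) :
    x ^ (k+1) - y ^ (k+1) ≤ (k+1) * x ^ k * (x - y) := by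
  induction k with
  | zero => simp
  | succ k ih =>
    have hx := hy.trans hxy
    have h1 : x * (x ^ (k+1) - y ^ (k+1)) ≤ x * ((k+1) * x ^ k * (x - y)) :=
      mul_le_mul_of_nonneg_left ih hx
    have h2 : y ^ (k+1) * (x - y) ≤ x ^ (k+1) * (x - y) :=
      mul_le_mul_of_nonneg_right (pow_le_pow_left₀ hy hxy _) (by linarith)
    push_cast
    calc x ^ (k+1+1) - y ^ (k+1+1) = x * (x ^ (k+1) - y ^ (k+1)) + y ^ (k+1) * (x - y) := by ring
      _ ≤ _ := add_le_add h1 h2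
      _ = _ := by ring

lemma uD_summable : Summable (fun m : ℕ => 1 / ((m:ℝ) + 1/2) - 1 / ((m:ℝ) + 1)) := by
  have h : Summable (fun m : ℕ => 1 / ((m:ℝ) + 1) ^ 2) := by
    have := (summable_nat_add_iff 1).2 (Real.summable_one_div_nat_pow.2 (show 1 < 2 by norm_num))
    simpa using this
  refine Summable.of_nonneg_of_le (fun m => ?_) (fun m => ?_) h
  · rw [sub_nonneg]; apply one_div_le_one_div_of_le (by positivity); linarith
  · have hm : (0:ℝ) ≤ m := Nat.cast_nonneg m
    have : 1 / ((m:ℝ) + 1/2) - 1 / ((m:ℝ) + 1) = (1/2) / ((m + 1/2) * (m+1)) := by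
      field_simp; ring
    rw [this, div_le_div_iff₀ (by positivity) (by positivity)]
    nlinarith

lemma fD_bound (m k : ℕ) : |fD m k| ≤ (1 / ((m:ℝ) + 1/2) - 1 / ((m:ℝ) + 1)) * 2 ^ k := by
  have hm : (0:ℝ) ≤ m := Nat.cast_nonneg m
  have hy : (0:ℝ) ≤ 1 / ((m:ℝ) + 1) := by positivity
  have hxy : 1 / ((m:ℝ) + 1) ≤ 1 / ((m:ℝ) + 1/2) :=
    one_div_le_one_div_of_le (by positivity) (by linarith)
  have hx2 : 1 / ((m:ℝ) + 1/2) ≤ 2 := by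
    rw [div_le_iff₀ (by positivity)]; linarith
  unfold fD
  generalize 1 / ((m:ℝ) + 1/2) = x at *
  generalize 1 / ((m:ℝ) + 1) = y at *
  have hp := pow_sub_le x y hy hxy k
  have hp0 : 0 ≤ x ^ (k+1) - y ^ (k+1) := sub_nonneg.2 (pow_le_pow_left₀ hy hxy _)
  rw [abs_mul, abs_div, abs_pow, abs_neg, abs_one, one_pow, abs_of_nonneg hp0,
    abs_of_pos (by positivity)]
  have h3 : x ^ k ≤ 2 ^ k := pow_le_pow_left₀ (hy.trans hxy) hx2 k
  calc 1 / ((k:ℝ) + 1) * (x ^ (k+1) - y ^ (k+1)) ≤ 1 / ((k:ℝ) + 1) * ((k+1) * x ^ k * (x - y)) :=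
        mul_le_mul_of_nonneg_left hp (by positivity)
    _ = (x - y) * x ^ k := by field_simp
    _ ≤ _ := mul_le_mul_of_nonneg_left h3 (by linarith)

lemma log_row {z : ℝ} (hz : 0 ≤ z) (hz1 : z < 1) :
    HasSum (fun k : ℕ => (-1) ^ k / ((k:ℝ) + 1) * z ^ (k+1)) (Real.log (1 + z)) := by
  have := (Real.hasSum_pow_div_log_of_abs_lt_one (x := -z) (by rwa [abs_neg, abs_of_nonneg hz])).neg
  rw [neg_neg, sub_neg_eq_add] at this
  refine this.congr_fun (fun k => ?_)
  rw [neg_pow z, pow_succ (-1 : ℝ)]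
  ring

lemma fD_row {s : ℝ} (hs : 0 < s) (hs1 : s < 1/4) (m : ℕ) :
    HasSum (fun k => fD m k * s ^ (k+1)) (cbT s m) := by
  have hm : (0:ℝ) ≤ m := Nat.cast_nonneg m
  have h1 : s * (1 / ((m:ℝ) + 1/2)) < 1 := by
    rw [mul_one_div, div_lt_one (by positivity)]; linarith
  have h2 : s * (1 / ((m:ℝ) + 1)) < 1 := by
    rw [mul_one_div, div_lt_one (by positivity)]; linarith
  refine ((log_row (by positivity) h1).sub (log_row (by positivity) h2)).congr_fun (fun k => ?_)
  unfold fD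
  rw [mul_pow, mul_pow]
  ring

noncomputable def gco : ℕ → ℝ
  | 0 => 1
  | k+1 => ∑' m, fG m k
noncomputable def cco : ℕ → ℝ
  | 0 => 0
  | k+1 => ∑' m, fD m k

lemma uD_nonneg (m : ℕ) : 0 ≤ 1 / ((m:ℝ) + 1/2) - 1 / ((m:ℝ) + 1) := by
  rw [sub_nonneg]; apply one_div_le_one_div_of_le (by positivity); linarith

lemma main_rec (n : ℕ) : (n + 1) * gco (n + 1) =
    ∑ i ∈ Finset.range (n + 1), (i + 1) * cco (i + 1) * gco (n - i) := by
  apply key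
  · exact dbl_bound' _ _ (dbl_bound fG _ cbA_summable fG_bound)
  · exact dbl_bound' _ _ (dbl_bound fD _ uD_summable fD_bound)
  · intro s hs hs1
    obtain ⟨a1, a2⟩ := dbl fG _ cbA_summable
      (fun m => by have := cbA_pos (m+1); positivity) fG_bound hs hs1 _ (fG_row hs hs1)
    obtain ⟨b1, b2⟩ := dbl fD _ uD_summable uD_nonneg fD_bound hs hs1 _ (fD_row hs hs1)
    have hG : HasSum (fun k => gco k * s ^ k) (cbG s) := by
      rw [← hasSum_nat_add_iff' 1]
      have e : cbG s - ∑ i ∈ Finset.range 1, gco i * s ^ i = ∑' n : ℕ, cbA (n+1) * s / (n + 1 + s) := by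
        simp [cbG, gco]
      rw [e]
      exact a2
    have hC : HasSum (fun k => cco k * s ^ k) (∑' m, cbT s m) := by
      rw [← hasSum_nat_add_iff' 1]
      simpa [cco] using b2
    have hL : ∑' m, cbT s m = Real.log (cbG s) :=
      tendsto_nhds_unique b1.hasSum.tendsto_sum_nat (cbG_tendsto hs.le (by linarith))
    rw [hG.tsum_eq, hC.tsum_eq, hL, Real.exp_log]
    linarith [cbG_one_le hs.le]

lemma cco_one : cco 1 = 2 * Real.log 2 := by
  have h0 : cco 1 = ∑' m : ℕ, (1 / ((m:ℝ) + 1/2) - 1 / ((m:ℝ) + 1)) := by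
    simp [cco, fD]
  rw [h0]
  refine tendsto_nhds_unique uD_summable.hasSum.tendsto_sum_nat ?_
  have h1 : ∀ N : ℕ, ∑ m ∈ Finset.range N, (1 / ((m:ℝ) + 1/2) - 1 / ((m:ℝ) + 1)) =
      2 * ((harmonic (2 * N) : ℝ) - harmonic N) := by
    intro N
    induction N with
    | zero => simp
    | succ N ih =>
      rw [Finset.sum_range_succ, ih, show 2 * (N+1) = 2 * N + 1 + 1 by ring, harmonic_succ,
        harmonic_succ, harmonic_succ]
      push_cast
      field_simp
      ring
  simp_rw [h1]
  have h2 := Real.tendsto_harmonic_sub_log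
  have h3 : Tendsto (fun N : ℕ => 2 * N) atTop atTop := tendsto_id.const_mul_atTop' (by norm_num)
  have h4 := (((h2.comp h3).sub h2).add_const (Real.log 2)).const_mul 2
  simp only [sub_self, zero_add] at h4
  refine h4.congr' ?_
  filter_upwards [eventually_gt_atTop 0] with N hN
  have : Real.log ((2 * N : ℕ) : ℝ) = Real.log 2 + Real.log N := by
    push_cast
    rw [Real.log_mul (by norm_num) (by positivity)]
  simp only [Function.comp, this]
  ring

noncomputable def zr (k : ℕ) : ℝ := ∑' n : ℕ, 1 / (n:ℝ) ^ k

lemma zr_zeta {k : ℕ} (hk : 1 < k) : riemannZeta k = (zr k : ℂ) := by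
  rw [zeta_nat_eq_tsum_of_gt_one hk, zr]
  push_cast
  rfl

lemma cco_zeta (k : ℕ) : cco (k + 2) = (-1) ^ (k+1) / (k + 2) * ((2 ^ (k+2) - 2) * zr (k+2)) := by
  have hs : Summable (fun n : ℕ => 1 / (n:ℝ) ^ (k+2)) :=
    Real.summable_one_div_nat_pow.2 (by omega)
  have h1 : HasSum (fun m : ℕ => (1 / ((m:ℝ) + 1)) ^ (k+2)) (zr (k+2)) := by
    have := (hasSum_nat_add_iff' 1).2 hs.hasSum
    simpa [zr] using this
  have hodd : Summable (fun m : ℕ => 1 / ((2 * m + 1 : ℕ) : ℝ) ^ (k+2)) :=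
    hs.comp_injective (i := fun m : ℕ => 2 * m + 1) (fun a b h => by simpa using h)
  have heven : HasSum (fun m : ℕ => 1 / ((2 * m : ℕ) : ℝ) ^ (k+2)) ((1/2) ^ (k+2) * zr (k+2)) := by
    refine (hs.hasSum.mul_left ((1/2) ^ (k+2))).congr_fun (fun m => ?_)
    push_cast
    rw [mul_pow, div_pow]
    simp [mul_comm]
  have h2 : (1/2) ^ (k+2) * zr (k+2) + ∑' m : ℕ, 1 / ((2 * m + 1 : ℕ) : ℝ) ^ (k+2) = zr (k+2) :=
    (heven.even_add_odd (f := fun n : ℕ => 1 / (n:ℝ) ^ (k+2)) hodd.hasSum).unique hs.hasSum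
  have h3 : HasSum (fun m : ℕ => (1 / ((m:ℝ) + 1/2)) ^ (k+2)) ((2 ^ (k+2) - 1) * zr (k+2)) := by
    have e : (2 ^ (k+2) - 1) * zr (k+2) = 2 ^ (k+2) * ∑' m : ℕ, 1 / ((2 * m + 1 : ℕ) : ℝ) ^ (k+2) := by
      have : (2:ℝ) ^ (k+2) * (1/2) ^ (k+2) = 1 := by rw [← mul_pow]; norm_num
      linear_combination (-(2:ℝ) ^ (k+2)) * h2 + zr (k+2) * this
    rw [e]
    refine (hodd.hasSum.mul_left (2 ^ (k+2))).congr_fun (fun m => ?_)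
    push_cast
    rw [mul_one_div, ← div_pow]
    congr 1
    field_simp
  have h4 := ((h3.sub h1).mul_left ((-1) ^ (k+1) / ((k:ℝ) + 2))).tsum_eq
  have e2 : cco (k+2) = ∑' m : ℕ, (-1) ^ (k+1) / ((k:ℝ) + 2) *
      ((1 / ((m:ℝ) + 1/2)) ^ (k+2) - (1 / ((m:ℝ) + 1)) ^ (k+2)) := by
    simp only [cco, fD]
    congr 1
    funext m
    push_cast
    congr 2
    ring
  rw [e2, h4]
  ring

lemma zr_two : zr 2 = Real.pi ^ 2 / 6 := hasSum_zeta_two.tsum_eq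
lemma zr_four : zr 4 = Real.pi ^ 4 / 90 := hasSum_zeta_four.tsum_eq
lemma zr_six : zr 6 = Real.pi ^ 6 / 945 := by
  have h := (hasSum_zeta_nat (show 3 ≠ 0 by norm_num)).tsum_eq
  have hb5 : bernoulli' 5 = 0 := by
    rw [bernoulli'_def]
    norm_num [Finset.sum_range_succ, Nat.choose]
  have hb : bernoulli 6 = 1 / 42 := by
    rw [bernoulli_eq_bernoulli'_of_ne_one (by decide)]
    rw [bernoulli'_def]
    norm_num [Finset.sum_range_succ, hb5, Nat.choose]
  unfold zr
  norm_num [hb, Nat.factorial] at h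
  norm_num
  rw [h]; ring

lemma gco_six : gco 6 = -∑' n : ℕ, (Nat.centralBinom (n + 1) : ℝ) /
        ((4 : ℝ) ^ (n + 1) * ((n : ℝ) + 1) ^ 6) := by
  rw [← tsum_neg]
  simp only [gco, fG, cbA]
  congr 1
  funext n
  rw [div_div]
  ring


theorem centralBinom_inv_n6_sum :
    ((∑' n : ℕ, (Nat.centralBinom (n + 1) : ℝ) /
        ((4 : ℝ) ^ (n + 1) * ((n : ℝ) + 1) ^ 6) : ℝ) : ℂ) =
      (79 / 15120) * (Real.pi : ℂ) ^ 6 - 12 * riemannZeta 5 * (Real.log 2 : ℂ)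
        + (1 / 20) * (Real.pi : ℂ) ^ 4 * (Real.log 2 : ℂ) ^ 2
        - 2 * riemannZeta 3 ^ 2
        + (2 / 3) * riemannZeta 3 * (Real.pi : ℂ) ^ 2 * (Real.log 2 : ℂ)
        - (8 / 3) * riemannZeta 3 * (Real.log 2 : ℂ) ^ 3
        + (1 / 9) * (Real.pi : ℂ) ^ 2 * (Real.log 2 : ℂ) ^ 4
        - (4 / 45) * (Real.log 2 : ℂ) ^ 6 := by
  have z3 : riemannZeta 3 = (zr 3 : ℂ) := by exact_mod_cast zr_zeta (k := 3) (by norm_num)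
  have z5 : riemannZeta 5 = (zr 5 : ℂ) := by exact_mod_cast zr_zeta (k := 5) (by norm_num)
  rw [z3, z5]
  have hg := gco_six
  have g0 : gco 0 = 1 := rfl
  have c1 := cco_one
  have c2 := cco_zeta 0
  have c3 := cco_zeta 1
  have c4 := cco_zeta 2
  have c5 := cco_zeta 3
  have c6 := cco_zeta 4
  have r1 := main_rec 0
  have r2 := main_rec 1
  have r3 := main_rec 2
  have r4 := main_rec 3
  have r5 := main_rec 4
  have r6 := main_rec 5
  norm_num [zr_two, zr_four, zr_six] at c2 c3 c4 c5 c6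
  norm_num [Finset.sum_range_succ, g0, c1, c2, c3, c4, c5, c6] at r1 r2 r3 r4 r5 r6
  have e2 := (eq_div_iff (by norm_num)).2 ((mul_comm _ _).trans r2)
  have e3 := (eq_div_iff (by norm_num)).2 ((mul_comm _ _).trans r3)
  have e4 := (eq_div_iff (by norm_num)).2 ((mul_comm _ _).trans r4)
  have e5 := (eq_div_iff (by norm_num)).2 ((mul_comm _ _).trans r5)
  have e6 := (eq_div_iff (by norm_num)).2 ((mul_comm _ _).trans r6)
  have hS := neg_eq_iff_eq_neg.2 hg
  rw [← hS, e6, e5, e4, e3, e2, r1]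
  push_cast
  ring
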